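/- arXiv:1208.3510 — 2 statements merged into one kernel-verified Lean document; each statement's English description precedes it below -/
import Mathlib

section
/- Let F : [a,b] × [0,T) → ℝ² be a smooth planar curve shortening flow with nonvanishing speed. Then the curvature satisfies the parabolic evolution equation ∂_t κ = ∂_s² κ + κ³ at every (u,t), where ∂_s = v⁻¹ ∂_u with v = ‖∂_u F‖. -/
open Real MeasureTheory Set Filter

noncomputable section

/-- The Euclidean plane. -/
abbrev E2 : Type := EuclideanSpace ℝ (Fin 2)

/-- Rotation of a vector by +π/2. -/
def rot (w : E2) : E2 := !₂[-(w 1), w 0]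

namespace CSF

variable (F : ℝ → ℝ → E2)

/-- The partial derivative ∂ᵤF. -/
def pu (u t : ℝ) : E2 := deriv (fun x => F x t) u

/-- The partial derivative ∂ₜF. -/
def pt (u t : ℝ) : E2 := deriv (fun x => F u x) t

/-- The speed v = ‖∂ᵤF‖. -/
def speed (u t : ℝ) : ℝ := ‖pu F u t‖

/-- The arclength derivative ∂ₛ f = v⁻¹ ∂ᵤ f of a quantity along the flow. -/
def sderiv {X : Type*} [NormedAddCommGroup X] [NormedSpace ℝ X]
    (f : ℝ → ℝ → X) (u t : ℝ) : X :=
  (speed F u t)⁻¹ • deriv (fun x => f x t) u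

/-- The unit tangent T = ∂ₛ F. -/
def tang (u t : ℝ) : E2 := (speed F u t)⁻¹ • pu F u t

/-- The unit normal N, the tangent rotated by +π/2. -/
def nor (u t : ℝ) : E2 := rot (tang F u t)

/-- The curvature κ = ⟨∂ₛT, N⟩. -/
def curv (u t : ℝ) : ℝ := inner (𝕜 := ℝ) (sderiv F (tang F) u t) (nor F u t)

/-- `F` is a smooth planar curve shortening flow with nonvanishing speed on `[a,b] × [0,T)`:
it is smooth, `∂ᵤF ≠ 0` on the domain, and `∂ₜF = κN` on the domain. -/
def IsCSF (a b T : ℝ) : Prop :=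
  ContDiff ℝ (⊤ : ℕ∞) (fun p : ℝ × ℝ => F p.1 p.2) ∧
  (∀ u ∈ Icc a b, ∀ t ∈ Ico 0 T, pu F u t ≠ 0) ∧
  (∀ u ∈ Icc a b, ∀ t ∈ Ico 0 T, pt F u t = curv F u t • nor F u t)

end CSF

/-!
With the Frenet equations `∂ₛT = κN` and `∂ₛN = -κT`, the flow equation gives
`∂ₛ∂ₜF = ∂ₛ(κN) = (∂ₛκ)N - κ²T`. Its tangential part is the change of speed `∂ₜv = -κ²v`, which is
the commutator rule `∂ₜ∂ₛ = ∂ₛ∂ₜ + κ²∂ₛ`. Applied to `F`, this rule gives `∂ₜT = (∂ₛκ)N`; applied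
to `T`, it gives `∂ₜ∂ₛT = (∂ₛ²κ + κ³)N - κ(∂ₛκ)T`, whose normal part is `∂ₜκ`.

The flow equation is known only over the parameter interval, while `∂ᵤ` is two-sided. At an endpoint
the `u`-derivatives of its two sides still agree, because both sides are differentiable there and
derivatives within the interval are unique.
-/

namespace CSF

open Function
open scoped RealInnerProductSpace Topology

section Partial

variable {𝕜 E : Type*} [NontriviallyNormedField 𝕜] [NormedAddCommGroup E] [NormedSpace 𝕜 E]
  {f : 𝕜 → 𝕜 → E} {m n : WithTop ℕ∞} {u t : 𝕜}

theorem differentiableAt_left (hf : DifferentiableAt 𝕜 (uncurry f) (u, t)) :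
    DifferentiableAt 𝕜 (fun x => f x t) u :=
  hf.comp (f := fun x => (x, t)) u (differentiableAt_id.prodMk (differentiableAt_const t))

theorem differentiableAt_right (hf : DifferentiableAt 𝕜 (uncurry f) (u, t)) :
    DifferentiableAt 𝕜 (f u) t :=
  hf.comp t ((differentiableAt_const u).prodMk differentiableAt_id)

theorem deriv_left_eq_fderiv (hf : DifferentiableAt 𝕜 (uncurry f) (u, t)) :
    deriv (fun x => f x t) u = fderiv 𝕜 (uncurry f) (u, t) (1, 0) :=
  (hf.hasFDerivAt.comp_hasDerivAt (f := fun x => (x, t)) u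
    ((hasDerivAt_id u).prodMk (hasDerivAt_const u t))).deriv

theorem deriv_right_eq_fderiv (hf : DifferentiableAt 𝕜 (uncurry f) (u, t)) :
    deriv (f u) t = fderiv 𝕜 (uncurry f) (u, t) (0, 1) :=
  (hf.hasFDerivAt.comp_hasDerivAt t ((hasDerivAt_const t u).prodMk (hasDerivAt_id t))).deriv

theorem eventually_differentiableAt {G : Type*} [NormedAddCommGroup G] [NormedSpace 𝕜 G]
    {g : G → E} {x : G} (hg : ContDiffAt 𝕜 n g x) (hn : 1 ≤ n) :
    ∀ᶠ y in 𝓝 x, DifferentiableAt 𝕜 g y :=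
  ((hg.of_le hn).eventually (by simp)).mono fun _ hy => hy.differentiableAt one_ne_zero

theorem uncurry_deriv_left_eventuallyEq (hf : ContDiffAt 𝕜 n (uncurry f) (u, t)) (hn : 1 ≤ n) :
    uncurry (fun x τ => deriv (fun y => f y τ) x)
      =ᶠ[𝓝 (u, t)] fun p => fderiv 𝕜 (uncurry f) p (1, 0) :=
  (eventually_differentiableAt hf hn).mono fun _ hp => deriv_left_eq_fderiv hp

theorem uncurry_deriv_right_eventuallyEq (hf : ContDiffAt 𝕜 n (uncurry f) (u, t)) (hn : 1 ≤ n) :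
    uncurry (fun x τ => deriv (f x) τ)
      =ᶠ[𝓝 (u, t)] fun p => fderiv 𝕜 (uncurry f) p (0, 1) :=
  (eventually_differentiableAt hf hn).mono fun _ hp => deriv_right_eq_fderiv hp

theorem contDiffAt_deriv_left (hf : ContDiffAt 𝕜 n (uncurry f) (u, t)) (hmn : m + 1 ≤ n) :
    ContDiffAt 𝕜 m (uncurry fun x τ => deriv (fun y => f y τ) x) (u, t) :=
  ((hf.fderiv_right hmn).clm_apply contDiffAt_const).congr_of_eventuallyEq
    (uncurry_deriv_left_eventuallyEq hf (le_add_self.trans hmn))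

theorem contDiffAt_deriv_right (hf : ContDiffAt 𝕜 n (uncurry f) (u, t)) (hmn : m + 1 ≤ n) :
    ContDiffAt 𝕜 m (uncurry fun x τ => deriv (f x) τ) (u, t) :=
  ((hf.fderiv_right hmn).clm_apply contDiffAt_const).congr_of_eventuallyEq
    (uncurry_deriv_right_eventuallyEq hf (le_add_self.trans hmn))

theorem deriv_deriv_comm (hf : ContDiffAt 𝕜 n (uncurry f) (u, t)) (hn : minSmoothness 𝕜 2 ≤ n) :
    deriv (fun τ => deriv (fun x => f x τ) u) t = deriv (fun x => deriv (f x) t) u := by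
  have two_le : 2 ≤ n := le_minSmoothness.trans hn
  have one_le : 1 ≤ n := one_le_two.trans two_le
  have hone : (1 : WithTop ℕ∞) + 1 ≤ n := by rwa [one_add_one_eq_two]
  have hf' : DifferentiableAt 𝕜 (fderiv 𝕜 (uncurry f)) (u, t) :=
    (hf.fderiv_right hone).differentiableAt one_ne_zero
  calc deriv (fun τ => deriv (fun x => f x τ) u) t
      = fderiv 𝕜 (fderiv 𝕜 (uncurry f)) (u, t) (0, 1) (1, 0) := by
        rw [deriv_right_eq_fderiv (f := fun x τ => deriv (fun y => f y τ) x)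
            ((contDiffAt_deriv_left hf hone).differentiableAt one_ne_zero),
          (uncurry_deriv_left_eventuallyEq hf one_le).fderiv_eq,
          fderiv_clm_apply hf' (differentiableAt_const _)]
        simp
    _ = fderiv 𝕜 (fderiv 𝕜 (uncurry f)) (u, t) (1, 0) (0, 1) := hf.isSymmSndFDerivAt hn _ _
    _ = deriv (fun x => deriv (f x) t) u := by
        rw [deriv_left_eq_fderiv (f := fun x τ => deriv (f x) τ)
            ((contDiffAt_deriv_right hf hone).differentiableAt one_ne_zero),
          (uncurry_deriv_right_eventuallyEq hf one_le).fderiv_eq,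
          fderiv_clm_apply hf' (differentiableAt_const _)]
        simp

theorem deriv_eq_of_eqOn {g h : 𝕜 → E} {s : Set 𝕜} {x : 𝕜} (hs : UniqueDiffWithinAt 𝕜 s x)
    (hgh : EqOn g h s) (hx : x ∈ s) (hg : DifferentiableAt 𝕜 g x) (hh : DifferentiableAt 𝕜 h x) :
    deriv g x = deriv h x := by
  rw [← hg.derivWithin hs, ← hh.derivWithin hs, derivWithin_congr hgh (hgh hx)]

end Partial

section Norm

variable {E : Type*} [NormedAddCommGroup E] [InnerProductSpace ℝ E] {f : ℝ → E} {x : ℝ}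

theorem deriv_norm_eq_inner (hf : DifferentiableAt ℝ f x) (hx : f x ≠ 0) :
    deriv (fun y => ‖f y‖) x = ⟪‖f x‖⁻¹ • f x, deriv f x⟫ := by
  have hsq : HasDerivAt (fun y => ‖f y‖ ^ 2) (2 * ⟪f x, deriv f x⟫) x := hf.hasDerivAt.norm_sq
  have hpow : 2 * ‖f x‖ * deriv (fun y => ‖f y‖) x = 2 * ⟪f x, deriv f x⟫ := by
    simpa using ((hf.norm ℝ hx).hasDerivAt.fun_pow 2).unique hsq
  have hnorm : ‖f x‖ ≠ 0 := norm_ne_zero_iff.2 hx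
  rw [real_inner_smul_left]
  field_simp
  linarith

theorem inner_deriv_self_eq_zero {c : ℝ} (hf : DifferentiableAt ℝ f x)
    (hc : ∀ᶠ y in 𝓝 x, ‖f y‖ = c) : ⟪deriv f x, f x⟫ = 0 := by
  have hsq : HasDerivAt (fun y => ‖f y‖ ^ 2) (2 * ⟪f x, deriv f x⟫) x := hf.hasDerivAt.norm_sq
  have hconst : HasDerivAt (fun y => ‖f y‖ ^ 2) 0 x :=
    (hasDerivAt_const x (c ^ 2)).congr_of_eventuallyEq (hc.mono fun y hy => by simp only [hy])
  rw [real_inner_comm]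
  linarith [hsq.unique hconst]

end Norm

section Rotation

/-- The rotation `rot` of the plane by `π/2` as a linear isometry. -/
def rotIsometry : E2 →ₗᵢ[ℝ] E2 where
  toFun := rot
  map_add' x y := by ext i; fin_cases i <;> simp [rot, add_comm]
  map_smul' c x := by ext i; fin_cases i <;> simp [rot]
  norm_map' x := by simp [EuclideanSpace.norm_eq, rot, Fin.sum_univ_two, add_comm]

theorem rot_rot (w : E2) : rot (rot w) = -w := by
  ext i; fin_cases i <;> simp [rot]

theorem inner_rot_self (w : E2) : ⟪w, rot w⟫ = 0 := by
  simp [rot, PiLp.inner_apply, Fin.sum_univ_two, mul_comm]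

theorem rot_smul (c : ℝ) (w : E2) : rot (c • w) = c • rot w := rotIsometry.map_smul c w

theorem norm_rot (w : E2) : ‖rot w‖ = ‖w‖ := rotIsometry.norm_map w

theorem contDiff_rot {n : WithTop ℕ∞} : ContDiff ℝ n rot := rotIsometry.contDiff

theorem deriv_rot_comp {f : ℝ → E2} {x : ℝ} (hf : DifferentiableAt ℝ f x) :
    deriv (fun y => rot (f y)) x = rot (deriv f x) :=
  (rotIsometry.toContinuousLinearMap.hasFDerivAt.comp_hasDerivAt x hf.hasDerivAt).deriv

theorem inner_smul_add_inner_rot_smul_rot {e : E2} (he : ‖e‖ = 1) (w : E2) :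
    ⟪w, e⟫ • e + ⟪w, rot e⟫ • rot e = w := by
  have hsq : e 0 ^ 2 + e 1 ^ 2 = 1 := by
    simpa [EuclideanSpace.norm_eq, Fin.sum_univ_two] using he
  ext i
  fin_cases i <;> simp [rot, PiLp.inner_apply, Fin.sum_univ_two]
  · linear_combination w 0 * hsq
  · linear_combination w 1 * hsq

end Rotation

section Regularity

variable {F : ℝ → ℝ → E2} {X : Type*} [NormedAddCommGroup X] [NormedSpace ℝ X]
  {f : ℝ → ℝ → X} {m n : WithTop ℕ∞} {u t : ℝ}

theorem contDiffAt_pu (hF : ContDiffAt ℝ n (uncurry F) (u, t)) (hmn : m + 1 ≤ n) :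
    ContDiffAt ℝ m (uncurry (pu F)) (u, t) :=
  contDiffAt_deriv_left hF hmn

theorem contDiffAt_speed (hF : ContDiffAt ℝ n (uncurry F) (u, t)) (h0 : pu F u t ≠ 0)
    (hmn : m + 1 ≤ n) : ContDiffAt ℝ m (uncurry (speed F)) (u, t) :=
  (contDiffAt_pu hF hmn).norm ℝ h0

theorem contDiffAt_sderiv (hF : ContDiffAt ℝ n (uncurry F) (u, t)) (h0 : pu F u t ≠ 0)
    (hf : ContDiffAt ℝ n (uncurry f) (u, t)) (hmn : m + 1 ≤ n) :
    ContDiffAt ℝ m (uncurry (sderiv F f)) (u, t) :=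
  ((contDiffAt_speed hF h0 hmn).inv (norm_ne_zero_iff.2 h0)).smul (contDiffAt_deriv_left hf hmn)

theorem contDiffAt_tang (hF : ContDiffAt ℝ n (uncurry F) (u, t)) (h0 : pu F u t ≠ 0)
    (hmn : m + 1 ≤ n) : ContDiffAt ℝ m (uncurry (tang F)) (u, t) :=
  contDiffAt_sderiv hF h0 hF hmn

theorem contDiffAt_nor (hF : ContDiffAt ℝ n (uncurry F) (u, t)) (h0 : pu F u t ≠ 0)
    (hmn : m + 1 ≤ n) : ContDiffAt ℝ m (uncurry (nor F)) (u, t) :=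
  contDiff_rot.contDiffAt.comp (u, t) (contDiffAt_tang hF h0 hmn)

theorem contDiffAt_curv (hF : ContDiffAt ℝ n (uncurry F) (u, t)) (h0 : pu F u t ≠ 0)
    (hmn : m + 2 ≤ n) : ContDiffAt ℝ m (uncurry (curv F)) (u, t) := by
  have hmn' : m + 1 + 1 ≤ n := by rwa [add_assoc, one_add_one_eq_two]
  have hm : m + 1 ≤ n := le_self_add.trans hmn'
  exact (contDiffAt_sderiv (hF.of_le hm) h0 (contDiffAt_tang hF h0 hmn') le_rfl).inner ℝ
    (contDiffAt_nor hF h0 hm)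

theorem differentiableAt_tang (hF : ContDiffAt ℝ 2 (uncurry F) (u, t)) (h0 : pu F u t ≠ 0) :
    DifferentiableAt ℝ (uncurry (tang F)) (u, t) :=
  (contDiffAt_tang hF h0 one_add_one_eq_two.le).differentiableAt one_ne_zero

theorem differentiableAt_nor (hF : ContDiffAt ℝ 2 (uncurry F) (u, t)) (h0 : pu F u t ≠ 0) :
    DifferentiableAt ℝ (uncurry (nor F)) (u, t) :=
  (contDiffAt_nor hF h0 one_add_one_eq_two.le).differentiableAt one_ne_zero

end Regularity

section Frenet

variable {F : ℝ → ℝ → E2} {X : Type*} [NormedAddCommGroup X] [NormedSpace ℝ X] {u t : ℝ}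

theorem speed_smul_sderiv (h0 : pu F u t ≠ 0) (f : ℝ → ℝ → X) :
    speed F u t • sderiv F f u t = deriv (fun x => f x t) u :=
  smul_inv_smul₀ (norm_ne_zero_iff.2 h0) _

theorem sderiv_eq_of_eqOn {f g : ℝ → ℝ → X} {s : Set ℝ} (hs : UniqueDiffWithinAt ℝ s u)
    (hfg : ∀ x ∈ s, f x t = g x t) (hu : u ∈ s) (hf : DifferentiableAt ℝ (fun x => f x t) u)
    (hg : DifferentiableAt ℝ (fun x => g x t) u) : sderiv F f u t = sderiv F g u t :=
  congrArg _ (deriv_eq_of_eqOn hs hfg hu hf hg)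

theorem sderiv_smul {c : ℝ → ℝ → ℝ} {f : ℝ → ℝ → X} (hc : DifferentiableAt ℝ (fun x => c x t) u)
    (hf : DifferentiableAt ℝ (fun x => f x t) u) :
    sderiv F (fun x τ => c x τ • f x τ) u t
      = c u t • sderiv F f u t + sderiv F c u t • f u t := by
  simp only [sderiv, deriv_fun_smul hc hf, smul_add, smul_smul, smul_eq_mul, mul_comm]

theorem norm_tang (h0 : pu F u t ≠ 0) : ‖tang F u t‖ = 1 := norm_smul_inv_norm (𝕜 := ℝ) h0

theorem norm_nor (h0 : pu F u t ≠ 0) : ‖nor F u t‖ = 1 := (norm_rot _).trans (norm_tang h0)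

theorem inner_tang_nor : ⟪tang F u t, nor F u t⟫ = 0 := inner_rot_self _

theorem sderiv_tang (hF : ContDiffAt ℝ 2 (uncurry F) (u, t)) (h0 : pu F u t ≠ 0) :
    sderiv F (tang F) u t = curv F u t • nor F u t := by
  have hpu : ContinuousAt (fun x => pu F x t) u :=
    (differentiableAt_left ((contDiffAt_pu hF one_add_one_eq_two.le).differentiableAt
      one_ne_zero)).continuousAt
  have hunit : ∀ᶠ x in 𝓝 u, ‖tang F x t‖ = 1 := (hpu.eventually_ne h0).mono fun _ => norm_tang
  have horth : ⟪sderiv F (tang F) u t, tang F u t⟫ = 0 := by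
    rw [sderiv, real_inner_smul_left, inner_deriv_self_eq_zero
      (differentiableAt_left (differentiableAt_tang hF h0)) hunit, mul_zero]
  calc sderiv F (tang F) u t
      = ⟪sderiv F (tang F) u t, tang F u t⟫ • tang F u t + curv F u t • nor F u t :=
        (inner_smul_add_inner_rot_smul_rot (norm_tang h0) _).symm
    _ = curv F u t • nor F u t := by rw [horth, zero_smul, zero_add]

theorem sderiv_nor (hF : ContDiffAt ℝ 2 (uncurry F) (u, t)) (h0 : pu F u t ≠ 0) :
    sderiv F (nor F) u t = -curv F u t • tang F u t :=
  calc sderiv F (nor F) u t = rot (sderiv F (tang F) u t) := by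
        simp only [sderiv, nor, rot_smul,
          deriv_rot_comp (differentiableAt_left (differentiableAt_tang hF h0))]
    _ = -curv F u t • tang F u t := by
        rw [sderiv_tang hF h0, rot_smul, nor, rot_rot, smul_neg, neg_smul]

theorem sderiv_smul_nor {c : ℝ → ℝ → ℝ} (hF : ContDiffAt ℝ 2 (uncurry F) (u, t))
    (h0 : pu F u t ≠ 0) (hc : DifferentiableAt ℝ (fun x => c x t) u) :
    sderiv F (fun x τ => c x τ • nor F x τ) u t
      = sderiv F c u t • nor F u t - (c u t * curv F u t) • tang F u t := by
  rw [sderiv_smul hc (differentiableAt_left (differentiableAt_nor hF h0)), sderiv_nor hF h0]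
  module

end Frenet

section Evolution

variable {F : ℝ → ℝ → E2} {s : Set ℝ} {t : ℝ}

/-- At the single time `t`, the curve `F` moves by its curvature along the parameter set `s`: near
`s × {t}` it is regular of class `C⁴`, and `∂ₜF = κN` holds on `s × {t}`. Four derivatives are what
makes `κ` twice differentiable. -/
structure MovesByCurvature (F : ℝ → ℝ → E2) (s : Set ℝ) (t : ℝ) : Prop where
  contDiffAt : ∀ u ∈ s, ContDiffAt ℝ 4 (uncurry F) (u, t)
  pu_ne_zero : ∀ u ∈ s, pu F u t ≠ 0
  pt_eq : ∀ u ∈ s, pt F u t = curv F u t • nor F u t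

namespace MovesByCurvature

variable {u : ℝ}

theorem contDiffAt_two (h : MovesByCurvature F s t) (hu : u ∈ s) :
    ContDiffAt ℝ 2 (uncurry F) (u, t) :=
  (h.contDiffAt u hu).of_le (by norm_num)

theorem contDiffAt_curv (h : MovesByCurvature F s t) (hu : u ∈ s) :
    ContDiffAt ℝ 2 (uncurry (curv F)) (u, t) :=
  CSF.contDiffAt_curv (h.contDiffAt u hu) (h.pu_ne_zero u hu) (by norm_num)

theorem contDiffAt_tang (h : MovesByCurvature F s t) (hu : u ∈ s) :
    ContDiffAt ℝ 3 (uncurry (tang F)) (u, t) :=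
  CSF.contDiffAt_tang (h.contDiffAt u hu) (h.pu_ne_zero u hu) (by norm_num)

theorem differentiableAt_nor (h : MovesByCurvature F s t) (hu : u ∈ s) :
    DifferentiableAt ℝ (uncurry (nor F)) (u, t) :=
  CSF.differentiableAt_nor (h.contDiffAt_two hu) (h.pu_ne_zero u hu)

theorem differentiableAt_sderiv_tang (h : MovesByCurvature F s t) (hu : u ∈ s) :
    DifferentiableAt ℝ (uncurry (sderiv F (tang F))) (u, t) :=
  (contDiffAt_sderiv (h.contDiffAt_two hu) (h.pu_ne_zero u hu)
    ((h.contDiffAt_tang hu).of_le (by norm_num)) one_add_one_eq_two.le).differentiableAt one_ne_zero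

theorem sderiv_pt (h : MovesByCurvature F s t) (hs : UniqueDiffOn ℝ s) (hu : u ∈ s) :
    sderiv F (pt F) u t
      = sderiv F (curv F) u t • nor F u t - curv F u t ^ 2 • tang F u t := by
  have hpt : DifferentiableAt ℝ (fun x => pt F x t) u :=
    differentiableAt_left ((contDiffAt_deriv_right (m := 3) (h.contDiffAt u hu)
      (by norm_num)).differentiableAt three_ne_zero)
  have hcurv : DifferentiableAt ℝ (fun x => curv F x t) u :=
    differentiableAt_left ((h.contDiffAt_curv hu).differentiableAt two_ne_zero)
  have hnor : DifferentiableAt ℝ (fun x => nor F x t) u :=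
    differentiableAt_left (h.differentiableAt_nor hu)
  calc sderiv F (pt F) u t = sderiv F (fun x τ => curv F x τ • nor F x τ) u t :=
        sderiv_eq_of_eqOn (hs u hu) h.pt_eq hu hpt (hcurv.fun_smul hnor)
    _ = sderiv F (curv F) u t • nor F u t - curv F u t ^ 2 • tang F u t := by
        rw [sderiv_smul_nor (h.contDiffAt_two hu) (h.pu_ne_zero u hu) hcurv, sq]

theorem deriv_speed (h : MovesByCurvature F s t) (hs : UniqueDiffOn ℝ s) (hu : u ∈ s) :
    deriv (speed F u) t = -(curv F u t ^ 2 * speed F u t) := by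
  have hpu : DifferentiableAt ℝ (pu F u) t :=
    differentiableAt_right ((contDiffAt_pu (m := 3) (h.contDiffAt u hu)
      (by norm_num)).differentiableAt three_ne_zero)
  calc deriv (speed F u) t
      = ⟪tang F u t, deriv (pu F u) t⟫ := deriv_norm_eq_inner hpu (h.pu_ne_zero u hu)
    _ = ⟪tang F u t, deriv (fun x => pt F x t) u⟫ :=
        congrArg _ (deriv_deriv_comm (h.contDiffAt u hu) (by norm_num))
    _ = ⟪tang F u t, speed F u t •
          (sderiv F (curv F) u t • nor F u t - curv F u t ^ 2 • tang F u t)⟫ := by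
        rw [← speed_smul_sderiv (h.pu_ne_zero u hu), h.sderiv_pt hs hu]
    _ = -(curv F u t ^ 2 * speed F u t) := by
        simp only [real_inner_smul_right, inner_sub_right, inner_tang_nor,
          real_inner_self_eq_norm_sq, norm_tang (h.pu_ne_zero u hu)]
        ring

theorem deriv_sderiv {X : Type*} [NormedAddCommGroup X] [NormedSpace ℝ X] {f : ℝ → ℝ → X}
    (h : MovesByCurvature F s t) (hs : UniqueDiffOn ℝ s) (hu : u ∈ s)
    (hf : ContDiffAt ℝ 2 (uncurry f) (u, t)) :
    deriv (sderiv F f u) t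
      = sderiv F (fun x τ => deriv (f x) τ) u t + curv F u t ^ 2 • sderiv F f u t := by
  have hv : speed F u t ≠ 0 := norm_ne_zero_iff.2 (h.pu_ne_zero u hu)
  have hspeed : DifferentiableAt ℝ (speed F u) t :=
    differentiableAt_right ((contDiffAt_speed (m := 3) (h.contDiffAt u hu) (h.pu_ne_zero u hu)
      (by norm_num)).differentiableAt three_ne_zero)
  have hinv : deriv (fun τ => (speed F u τ)⁻¹) t = curv F u t ^ 2 * (speed F u t)⁻¹ := by
    rw [deriv_fun_inv'' hspeed hv, h.deriv_speed hs hu]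
    field_simp
  have hfu : DifferentiableAt ℝ (fun τ => deriv (fun x => f x τ) u) t :=
    differentiableAt_right ((contDiffAt_deriv_left hf
      one_add_one_eq_two.le).differentiableAt one_ne_zero)
  calc deriv (sderiv F f u) t
      = (speed F u t)⁻¹ • deriv (fun τ => deriv (fun x => f x τ) u) t
          + deriv (fun τ => (speed F u τ)⁻¹) t • deriv (fun x => f x t) u :=
        deriv_fun_smul (hspeed.inv hv) hfu
    _ = sderiv F (fun x τ => deriv (f x) τ) u t + curv F u t ^ 2 • sderiv F f u t := by
        rw [deriv_deriv_comm hf (by norm_num), hinv, mul_smul, sderiv, sderiv]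

theorem deriv_tang (h : MovesByCurvature F s t) (hs : UniqueDiffOn ℝ s) (hu : u ∈ s) :
    deriv (tang F u) t = sderiv F (curv F) u t • nor F u t :=
  calc deriv (tang F u) t = sderiv F (pt F) u t + curv F u t ^ 2 • tang F u t :=
        h.deriv_sderiv hs hu (h.contDiffAt_two hu)
    _ = sderiv F (curv F) u t • nor F u t := by rw [h.sderiv_pt hs hu, sub_add_cancel]

theorem deriv_nor (h : MovesByCurvature F s t) (hs : UniqueDiffOn ℝ s) (hu : u ∈ s) :
    deriv (nor F u) t = -sderiv F (curv F) u t • tang F u t := by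
  have htang : DifferentiableAt ℝ (tang F u) t :=
    differentiableAt_right ((h.contDiffAt_tang hu).differentiableAt three_ne_zero)
  calc deriv (nor F u) t = rot (deriv (tang F u) t) := deriv_rot_comp htang
    _ = -sderiv F (curv F) u t • tang F u t := by
        rw [h.deriv_tang hs hu, rot_smul, nor, rot_rot, smul_neg, neg_smul]

theorem deriv_sderiv_tang (h : MovesByCurvature F s t) (hs : UniqueDiffOn ℝ s) (hu : u ∈ s) :
    deriv (sderiv F (tang F) u) t
      = (sderiv F (sderiv F (curv F)) u t + curv F u t ^ 3) • nor F u t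
        - (sderiv F (curv F) u t * curv F u t) • tang F u t := by
  have hF := h.contDiffAt_two hu
  have h0 := h.pu_ne_zero u hu
  have htang : DifferentiableAt ℝ (fun x => deriv (tang F x) t) u :=
    differentiableAt_left ((contDiffAt_deriv_right (m := 2) (h.contDiffAt_tang hu)
      (by norm_num)).differentiableAt two_ne_zero)
  have hnor : DifferentiableAt ℝ (fun x => nor F x t) u :=
    differentiableAt_left (h.differentiableAt_nor hu)
  have hcurv : DifferentiableAt ℝ (fun x => sderiv F (curv F) x t) u :=
    differentiableAt_left ((contDiffAt_sderiv (m := 1) hF h0 (h.contDiffAt_curv hu)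
      one_add_one_eq_two.le).differentiableAt one_ne_zero)
  have hflow : sderiv F (fun x τ => deriv (tang F x) τ) u t
      = sderiv F (fun x τ => sderiv F (curv F) x τ • nor F x τ) u t :=
    sderiv_eq_of_eqOn (hs u hu) (fun _ hx => h.deriv_tang hs hx) hu htang (hcurv.fun_smul hnor)
  calc deriv (sderiv F (tang F) u) t
      = sderiv F (fun x τ => deriv (tang F x) τ) u t
          + curv F u t ^ 2 • sderiv F (tang F) u t :=
        h.deriv_sderiv hs hu ((h.contDiffAt_tang hu).of_le (by norm_num))
    _ = sderiv F (fun x τ => sderiv F (curv F) x τ • nor F x τ) u t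
          + curv F u t ^ 2 • curv F u t • nor F u t := by
        rw [sderiv_tang hF h0, hflow]
    _ = (sderiv F (sderiv F (curv F)) u t + curv F u t ^ 3) • nor F u t
          - (sderiv F (curv F) u t * curv F u t) • tang F u t := by
        rw [sderiv_smul_nor hF h0 hcurv]
        module

end MovesByCurvature

theorem IsCSF.movesByCurvature {a b T : ℝ} (hF : IsCSF F a b T) (ht : t ∈ Ico 0 T) :
    MovesByCurvature F (Icc a b) t where
  contDiffAt _ _ := (contDiff_infty.1 hF.1 4).contDiffAt
  pu_ne_zero u hu := hF.2.1 u hu t ht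
  pt_eq u hu := hF.2.2 u hu t ht

end Evolution

end CSF

theorem curvature_evolution_general {F : ℝ → ℝ → E2} {s : Set ℝ} {t u : ℝ}
    (hF : CSF.MovesByCurvature F s t) (hs : UniqueDiffOn ℝ s) (hu : u ∈ s) :
    deriv (fun x => CSF.curv F u x) t
      = CSF.sderiv F (CSF.sderiv F (CSF.curv F)) u t + (CSF.curv F u t) ^ 3 := by
  have h0 := hF.pu_ne_zero u hu
  have htang : DifferentiableAt ℝ (CSF.sderiv F (CSF.tang F) u) t :=
    CSF.differentiableAt_right (hF.differentiableAt_sderiv_tang hu)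
  have hnor : DifferentiableAt ℝ (CSF.nor F u) t :=
    CSF.differentiableAt_right (hF.differentiableAt_nor hu)
  calc deriv (fun x => CSF.curv F u x) t
      = inner ℝ (CSF.sderiv F (CSF.tang F) u t) (deriv (CSF.nor F u) t)
          + inner ℝ (deriv (CSF.sderiv F (CSF.tang F) u) t) (CSF.nor F u t) :=
        deriv_inner_apply ℝ htang hnor
    _ = CSF.sderiv F (CSF.sderiv F (CSF.curv F)) u t + (CSF.curv F u t) ^ 3 := by
        rw [CSF.sderiv_tang (hF.contDiffAt_two hu) h0, hF.deriv_nor hs hu,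
          hF.deriv_sderiv_tang hs hu]
        simp only [inner_sub_left, real_inner_smul_left, real_inner_smul_right, CSF.inner_tang_nor,
          real_inner_comm (CSF.tang F u t), real_inner_self_eq_norm_sq, CSF.norm_nor h0]
        ring

/-- the curvature satisfies ∂ₜκ = ∂ₛ²κ + κ³ at every (u,t). -/
theorem curvature_evolution (a b T : ℝ) (hab : a < b) (hT : 0 < T)
    (F : ℝ → ℝ → E2) (hF : CSF.IsCSF F a b T) :
    ∀ u ∈ Icc a b, ∀ t ∈ Ico 0 T,
      deriv (fun x => CSF.curv F u x) t
        = CSF.sderiv F (CSF.sderiv F (CSF.curv F)) u t + (CSF.curv F u t) ^ 3 :=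
  fun _ hu _ ht => curvature_evolution_general (hF.movesByCurvature ht) (uniqueDiffOn_Icc hab) hu
end
end

section
/- (Interior estimate for the distance ratio) Let F : [a,b] × [0,T) → ℝ² be a smooth embedded planar curve shortening flow with nonvanishing speed. For p ≤ q define D(p,q;t) = ‖F(q,t) - F(p,t)‖ and L(p,q;t) = ∫_p^q ‖∂_u F(u,t)‖ du. Suppose at some time t̂ ∈ (0,T) the function (p,q) ↦ (D/L)(p,q;t̂) attains a local minimum at a point (p,q) with a < p < q < b and F(p,t̂) ≠ F(q,t̂). Then d/dt [ (D/L)(p,q;t) ] at t = t̂ is ≥ 0. -/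
open Real MeasureTheory Set Filter

noncomputable section

/-!
Write `w` for the unit chord, `r` for the minimal ratio and `T_p`, `T_q` for the unit tangents at
the two points. Stationarity of `D / L` says that both tangents make the angle `⟪w, T⟫ = r` with
the chord, so in the plane either `T_q = T_p` or `T_p + T_q = 2 r w`. Minimality along unit-speed
motions of the endpoints, `T_q - ε T_p` with `ε = ±1`, gives
`0 ≤ ‖T_q - ε T_p‖² - r² (1 - ε)² + ⟪Δ, K_q - K_p⟫`, where `Δ` is the chord and `K` the curvature
vector. The first two terms cancel for `ε = 1` in the first case and for `ε = -1` in the second, so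
`⟪Δ, K_q - K_p⟫ ≥ 0`: under the flow the chord does not shrink, while `∂ₜL = -∫ κ² ds ≤ 0`.
-/

open Function
open scoped Topology RealInnerProductSpace

section Calculus

theorem second_derivative_nonneg_of_isLocalMin {f f' : ℝ → ℝ} {f'' x₀ : ℝ}
    (hf : ∀ x, HasDerivAt f (f' x) x) (hf' : HasDerivAt f' f'' x₀) (hmin : IsLocalMin f x₀) :
    0 ≤ f'' := by
  have hderiv : deriv f = f' := funext fun x => (hf x).deriv
  have hcrit : f' x₀ = 0 := hmin.hasDerivAt_eq_zero (hf x₀)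
  by_contra! hneg
  have hmax : IsLocalMax f x₀ :=
    isLocalMax_of_deriv_deriv_neg (by rwa [hderiv, hf'.deriv]) (by rw [hderiv, hcrit])
      (hf x₀).continuousAt
  have hconst : f =ᶠ[𝓝 x₀] fun _ => f x₀ := by
    filter_upwards [hmin, hmax] with x hge hle using le_antisymm hle hge
  have hzero : f' =ᶠ[𝓝 x₀] fun _ => 0 := by
    simpa only [hderiv, deriv_const'] using hconst.deriv
  exact hneg.ne (hf'.unique ((hasDerivAt_const x₀ 0).congr_of_eventuallyEq hzero))

theorem hasDerivAt_intervalIntegral_of_continuousOn {E : Type*} [NormedAddCommGroup E]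
    [NormedSpace ℝ E] {f f' : ℝ → ℝ → E} {p q t₀ : ℝ} {s : Set ℝ} (hs : s ∈ 𝓝 t₀)
    (hf : ∀ t ∈ s, ContinuousOn (f t) (uIcc p q))
    (hf' : ContinuousOn (uncurry f') (s ×ˢ uIcc p q))
    (hderiv : ∀ t ∈ s, ∀ u ∈ uIcc p q, HasDerivAt (fun t => f t u) (f' t u) t) :
    HasDerivAt (fun t => ∫ u in p..q, f t u) (∫ u in p..q, f' t₀ u) t₀ := by
  obtain ⟨k, hk, hks, hkc⟩ := local_compact_nhds hs
  obtain ⟨C, hC⟩ := (hkc.prod isCompact_uIcc).exists_bound_of_continuousOn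
    (hf'.mono (prod_mono_left hks))
  have hf'₀ : ContinuousOn (f' t₀) (uIcc p q) :=
    hf'.comp (f := fun u => (t₀, u)) (by fun_prop) fun u hu => ⟨mem_of_mem_nhds hs, hu⟩
  have hmeas {g : ℝ → E} (hg : ContinuousOn g (uIcc p q)) :
      AEStronglyMeasurable g (volume.restrict (uIoc p q)) :=
    (hg.mono uIoc_subset_uIcc).aestronglyMeasurable measurableSet_uIoc
  refine (intervalIntegral.hasDerivAt_integral_of_dominated_loc_of_deriv_le (bound := fun _ => C)
    hk ?_ (hf t₀ (mem_of_mem_nhds hs)).intervalIntegrable (hmeas hf'₀) ?_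
    intervalIntegrable_const ?_).2
  · filter_upwards [hs] with t ht using hmeas (hf t ht)
  · exact .of_forall fun u hu t ht => hC (t, u) ⟨ht, uIoc_subset_uIcc hu⟩
  · exact .of_forall fun u hu t ht => hderiv t (hks ht) u (uIoc_subset_uIcc hu)

theorem hasDerivAt_norm_comp {E : Type*} [NormedAddCommGroup E] [InnerProductSpace ℝ E]
    {f : ℝ → E} {f' : E} {x : ℝ} (hf : HasDerivAt f f' x) (hx : f x ≠ 0) :
    HasDerivAt (fun y => ‖f y‖) (⟪f x, f'⟫ / ‖f x‖) x := by
  have hsqrt := hf.norm_sq.sqrt (by positivity)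
  simp only [Real.sqrt_sq (norm_nonneg _)] at hsqrt
  exact hsqrt.congr_deriv (mul_div_mul_left _ _ two_ne_zero)

end Calculus

section PartialDerivatives

variable {E : Type*} [NormedAddCommGroup E] [NormedSpace ℝ E] {F : ℝ → ℝ → E}

theorem hasDerivAt_slice_left {g : ℝ × ℝ → E} {g' : ℝ × ℝ →L[ℝ] E} {u t : ℝ}
    (hg : HasFDerivAt g g' (u, t)) : HasDerivAt (fun x => g (x, t)) (g' (1, 0)) u :=
  HasFDerivAt.comp_hasDerivAt (f := fun x => (x, t)) u hg
    ((hasDerivAt_id u).prodMk (hasDerivAt_const u t))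

theorem hasDerivAt_slice_right {g : ℝ × ℝ → E} {g' : ℝ × ℝ →L[ℝ] E} {u t : ℝ}
    (hg : HasFDerivAt g g' (u, t)) : HasDerivAt (fun y => g (u, y)) (g' (0, 1)) t :=
  HasFDerivAt.comp_hasDerivAt (f := fun y => (u, y)) t hg
    ((hasDerivAt_const t u).prodMk (hasDerivAt_id t))

theorem deriv_left_eq_fderiv (hF : Differentiable ℝ (uncurry F)) (u t : ℝ) :
    deriv (fun x => F x t) u = fderiv ℝ (uncurry F) (u, t) (1, 0) :=
  (hasDerivAt_slice_left (hF (u, t)).hasFDerivAt).deriv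

theorem deriv_right_eq_fderiv (hF : Differentiable ℝ (uncurry F)) (u t : ℝ) :
    deriv (F u) t = fderiv ℝ (uncurry F) (u, t) (0, 1) :=
  (hasDerivAt_slice_right (hF (u, t)).hasFDerivAt).deriv

theorem contDiff_deriv_left {n : WithTop ℕ∞} (hF : ContDiff ℝ (n + 1) (uncurry F)) :
    ContDiff ℝ n (uncurry fun u t => deriv (fun x => F x t) u) := by
  rw [show (uncurry fun u t => deriv (fun x => F x t) u) =
    fun z => fderiv ℝ (uncurry F) z (1, 0) from
    funext fun z => deriv_left_eq_fderiv (hF.differentiable (by simp)) z.1 z.2]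
  exact (hF.fderiv_right le_rfl).clm_apply contDiff_const

theorem contDiff_deriv_right {n : WithTop ℕ∞} (hF : ContDiff ℝ (n + 1) (uncurry F)) :
    ContDiff ℝ n (uncurry fun u t => deriv (F u) t) := by
  rw [show (uncurry fun u t => deriv (F u) t) = fun z => fderiv ℝ (uncurry F) z (0, 1) from
    funext fun z => deriv_right_eq_fderiv (hF.differentiable (by simp)) z.1 z.2]
  exact (hF.fderiv_right le_rfl).clm_apply contDiff_const

theorem deriv_deriv_comm (hF : ContDiff ℝ 2 (uncurry F)) (u t : ℝ) :
    deriv (fun y => deriv (fun x => F x y) u) t = deriv (fun x => deriv (F x) t) u := by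
  have hdF := hF.differentiable two_ne_zero
  have hfderiv (w : ℝ × ℝ) : HasFDerivAt (fun z => fderiv ℝ (uncurry F) z w)
      ((fderiv ℝ (fderiv ℝ (uncurry F)) (u, t)).flip w) (u, t) := by
    have hdiff : DifferentiableAt ℝ (fderiv ℝ (uncurry F)) (u, t) :=
      (hF.fderiv_right (m := 1) le_rfl).differentiable one_ne_zero _
    simpa using hdiff.hasFDerivAt.clm_apply (hasFDerivAt_const w (u, t))
  have hsymm : IsSymmSndFDerivAt ℝ (uncurry F) (u, t) :=
    hF.contDiffAt.isSymmSndFDerivAt minSmoothness_of_isRCLikeNormedField.le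
  simp only [deriv_left_eq_fderiv hdF, deriv_right_eq_fderiv hdF,
    (hasDerivAt_slice_right (hfderiv (1, 0))).deriv, (hasDerivAt_slice_left (hfderiv (0, 1))).deriv]
  exact hsymm _ _

end PartialDerivatives

section TwoDimensional

variable {E : Type*} [NormedAddCommGroup E] [InnerProductSpace ℝ E] [Fact (Module.finrank ℝ E = 2)]

theorem eq_zero_or_eq_zero_of_inner_eq_zero {w x y : E} (hw : w ≠ 0) (hwx : ⟪w, x⟫ = 0)
    (hwy : ⟪w, y⟫ = 0) (hxy : ⟪x, y⟫ = 0) : x = 0 ∨ y = 0 := by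
  by_contra! ⟨hx, hy⟩
  have hli : LinearIndependent ℝ ![w, x, y] :=
    linearIndependent_of_ne_zero_of_inner_eq_zero
      (by simp [Fin.forall_fin_succ, hw, hx, hy])
      (by simp [Pairwise, Fin.forall_fin_succ, hwx, hwy, hxy, real_inner_comm])
  have : FiniteDimensional ℝ E := .of_fact_finrank_eq_two
  have hcard := hli.fintype_card_le_finrank
  rw [Fact.out (p := Module.finrank ℝ E = 2), Fintype.card_fin] at hcard
  omega

theorem eq_or_add_eq_smul_of_inner_eq {w x y : E} (hw : ‖w‖ = 1) (hxy : ‖x‖ = ‖y‖)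
    (hinner : ⟪w, x⟫ = ⟪w, y⟫) : y = x ∨ y + x = (2 * ⟪w, x⟫) • w := by
  have hww : ⟪w, w⟫ = 1 := by rw [real_inner_self_eq_norm_sq, hw, one_pow]
  have hsub : ⟪w, y - x⟫ = 0 := by rw [inner_sub_right, hinner, sub_self]
  have hadd : ⟪w, y + x - (2 * ⟪w, x⟫) • w⟫ = 0 := by
    rw [inner_sub_right, inner_add_right, inner_smul_right, hww, hinner]
    ring
  have horth : ⟪y - x, y + x - (2 * ⟪w, x⟫) • w⟫ = 0 := by
    rw [inner_sub_right, inner_smul_right, real_inner_comm w, hsub, real_inner_comm,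
      (real_inner_add_sub_eq_zero_iff y x).2 hxy.symm, mul_zero, sub_zero]
  have hw0 : w ≠ 0 := norm_ne_zero_iff.1 (hw.trans_ne one_ne_zero)
  exact (eq_zero_or_eq_zero_of_inner_eq_zero hw0 hsub hadd horth).imp sub_eq_zero.1 sub_eq_zero.1

end TwoDimensional

section Curve

variable {E : Type*} [NormedAddCommGroup E] [InnerProductSpace ℝ E]

/-- The unit tangent `γ' / ‖γ'‖` of a curve; it is `0` where `γ' = 0`. -/
def unitTangent (γ : ℝ → E) (u : ℝ) : E := ‖deriv γ u‖⁻¹ • deriv γ u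

/-- The curvature vector of a curve, the arclength derivative of its unit tangent. In the plane it
is `κN`, so curve shortening flow moves each point with this velocity. -/
def curvatureVector (γ : ℝ → E) (u : ℝ) : E := ‖deriv γ u‖⁻¹ • deriv (unitTangent γ) u

/-- The signed arclength of a curve between two parameters. -/
def arcLength (γ : ℝ → E) (p q : ℝ) : ℝ := ∫ u in p..q, ‖deriv γ u‖

/-- The ratio of extrinsic to intrinsic distance between two points of a curve. -/
def chordArcRatio (γ : ℝ → E) (p q : ℝ) : ℝ := ‖γ q - γ p‖ / arcLength γ p q

variable {γ : ℝ → E} {p q u : ℝ}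

theorem norm_unitTangent (hu : deriv γ u ≠ 0) : ‖unitTangent γ u‖ = 1 := by
  rw [unitTangent, norm_smul, norm_inv, norm_norm, inv_mul_cancel₀ (norm_ne_zero_iff.2 hu)]

theorem curvatureVector_eq (hγ : DifferentiableAt ℝ (deriv γ) u) (hu : deriv γ u ≠ 0) :
    curvatureVector γ u = (‖deriv γ u‖ ^ 2)⁻¹ • deriv (deriv γ) u -
      (⟪deriv γ u, deriv (deriv γ) u⟫ / ‖deriv γ u‖ ^ 4) • deriv γ u := by
  have hv := norm_ne_zero_iff.2 hu
  have hT : HasDerivAt (unitTangent γ) _ u :=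
    ((hasDerivAt_norm_comp hγ.hasDerivAt hu).fun_inv hv).fun_smul hγ.hasDerivAt
  rw [curvatureVector, hT.deriv]
  match_scalars <;> field_simp

theorem inner_deriv_curvatureVector (hγ : DifferentiableAt ℝ (deriv γ) u) (hu : deriv γ u ≠ 0) :
    ⟪deriv γ u, curvatureVector γ u⟫ = 0 := by
  have hv := norm_ne_zero_iff.2 hu
  rw [curvatureVector_eq hγ hu, inner_sub_right, inner_smul_right, inner_smul_right,
    real_inner_self_eq_norm_sq]
  field_simp
  ring

theorem inner_curvatureVector_deriv_deriv (hγ : DifferentiableAt ℝ (deriv γ) u)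
    (hu : deriv γ u ≠ 0) :
    ⟪curvatureVector γ u, deriv (deriv γ) u⟫ = ‖curvatureVector γ u‖ ^ 2 * ‖deriv γ u‖ ^ 2 := by
  have hv := norm_ne_zero_iff.2 hu
  have hdecomp : deriv (deriv γ) u = ‖deriv γ u‖ ^ 2 • curvatureVector γ u +
      (⟪deriv γ u, deriv (deriv γ) u⟫ / ‖deriv γ u‖ ^ 2) • deriv γ u := by
    rw [curvatureVector_eq hγ hu]
    match_scalars <;> field_simp
    ring
  rw [hdecomp, inner_add_right, inner_smul_right, inner_smul_right,
    real_inner_comm (deriv γ u), inner_deriv_curvatureVector hγ hu, real_inner_self_eq_norm_sq]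
  ring

theorem arcLength_pos (hγ : Continuous (deriv γ)) (himm : ∀ u ∈ Icc p q, deriv γ u ≠ 0)
    (hpq : p < q) : 0 < arcLength γ p q :=
  intervalIntegral.intervalIntegral_pos_of_pos_on (hγ.norm.intervalIntegrable _ _)
    (fun u hu => norm_pos_iff.2 (himm u (Ioo_subset_Icc_self hu))) hpq

theorem hasDerivAt_arcLength_comp (hγ : Continuous (deriv γ)) {x y : ℝ → ℝ} {x' y' τ : ℝ}
    (hx : HasDerivAt x x' τ) (hy : HasDerivAt y y' τ) :
    HasDerivAt (fun τ => arcLength γ (x τ) (y τ))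
      (y' * ‖deriv γ (y τ)‖ - x' * ‖deriv γ (x τ)‖) τ := by
  have hprim (z : ℝ) : HasDerivAt (arcLength γ 0) ‖deriv γ z‖ z :=
    (hγ.norm.integral_hasStrictDerivAt 0 z).hasDerivAt
  have hsplit : (fun τ => arcLength γ (x τ) (y τ)) =
      fun τ => arcLength γ 0 (y τ) - arcLength γ 0 (x τ) :=
    funext fun τ => (intervalIntegral.integral_interval_sub_left
      (hγ.norm.intervalIntegrable _ _) (hγ.norm.intervalIntegrable _ _)).symm
  rw [hsplit, mul_comm y', mul_comm x']
  exact ((hprim _).comp τ hy).sub ((hprim _).comp τ hx)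

end Curve

section DistanceComparison

variable {E : Type*} [NormedAddCommGroup E] [InnerProductSpace ℝ E]

-- The ratio is bounded below by its value `r`, so `‖c‖² - r² ℓ²` has a local minimum as well.
theorem variation_of_isLocalMin_norm_div {c c' : ℝ → E} {c'' : E} {ℓ ℓ' : ℝ → ℝ} {ℓ'' r x₀ : ℝ}
    (hc : ∀ x, HasDerivAt c (c' x) x) (hc' : HasDerivAt c' c'' x₀)
    (hℓ : ∀ x, HasDerivAt ℓ (ℓ' x) x) (hℓ' : HasDerivAt ℓ' ℓ'' x₀) (hpos : 0 < ℓ x₀)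
    (hr : ‖c x₀‖ / ℓ x₀ = r) (hmin : IsLocalMin (fun x => ‖c x‖ / ℓ x) x₀) :
    ⟪c x₀, c' x₀⟫ = r ^ 2 * (ℓ x₀ * ℓ' x₀) ∧
      0 ≤ ‖c' x₀‖ ^ 2 + ⟪c x₀, c''⟫ - r ^ 2 * (ℓ' x₀ ^ 2 + ℓ x₀ * ℓ'') := by
  have hderiv (x : ℝ) : HasDerivAt (fun x => ‖c x‖ ^ 2 - r ^ 2 * ℓ x ^ 2)
      (2 * (⟪c x, c' x⟫ - r ^ 2 * (ℓ x * ℓ' x))) x := by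
    refine ((hc x).norm_sq.sub (((hℓ x).fun_pow 2).const_mul (r ^ 2))).congr_deriv ?_
    push_cast
    ring
  have hderiv' : HasDerivAt (fun x => 2 * (⟪c x, c' x⟫ - r ^ 2 * (ℓ x * ℓ' x)))
      (2 * (‖c' x₀‖ ^ 2 + ⟪c x₀, c''⟫ - r ^ 2 * (ℓ' x₀ ^ 2 + ℓ x₀ * ℓ''))) x₀ := by
    refine ((((hc x₀).inner ℝ hc').sub
      (((hℓ x₀).fun_mul hℓ').const_mul (r ^ 2))).const_mul 2).congr_deriv ?_
    rw [real_inner_self_eq_norm_sq]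
    ring
  have hsq : IsLocalMin (fun x => ‖c x‖ ^ 2 - r ^ 2 * ℓ x ^ 2) x₀ := by
    have hr0 : 0 ≤ r := hr ▸ div_nonneg (norm_nonneg _) hpos.le
    have heq : ‖c x₀‖ = r * ℓ x₀ := (div_eq_iff hpos.ne').1 hr
    filter_upwards [hmin, (hℓ x₀).continuousAt.eventually (lt_mem_nhds hpos)] with x hx hxpos
    have hle : r * ℓ x ≤ ‖c x‖ := by rwa [hr, le_div_iff₀ hxpos] at hx
    rw [heq, mul_pow, sub_self, sub_nonneg, ← mul_pow]
    gcongr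
  have hfirst := hsq.hasDerivAt_eq_zero (hderiv x₀)
  have hsecond := second_derivative_nonneg_of_isLocalMin hderiv hderiv' hsq
  constructor <;> linarith

variable {γ : ℝ → E} {p q : ℝ}

theorem variation_of_isLocalMin_chordArcRatio (hγ : ContDiff ℝ 2 γ) (hp : deriv γ p ≠ 0)
    (hq : deriv γ q ≠ 0) (hpos : 0 < arcLength γ p q)
    (hmin : IsLocalMin (fun z : ℝ × ℝ => chordArcRatio γ z.1 z.2) (p, q)) (α β : ℝ) :
    ⟪γ q - γ p, β • deriv γ q - α • deriv γ p⟫ =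
        chordArcRatio γ p q ^ 2 * (arcLength γ p q * (β * ‖deriv γ q‖ - α * ‖deriv γ p‖)) ∧
      0 ≤ ‖β • deriv γ q - α • deriv γ p‖ ^ 2 +
          ⟪γ q - γ p, β ^ 2 • deriv (deriv γ) q - α ^ 2 • deriv (deriv γ) p⟫ -
        chordArcRatio γ p q ^ 2 * ((β * ‖deriv γ q‖ - α * ‖deriv γ p‖) ^ 2 + arcLength γ p q *
          (β ^ 2 * (⟪deriv γ q, deriv (deriv γ) q⟫ / ‖deriv γ q‖) -
            α ^ 2 * (⟪deriv γ p, deriv (deriv γ) p⟫ / ‖deriv γ p‖))) := by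
  have hγ' : ContDiff ℝ 1 (deriv γ) := hγ.deriv'
  have hline (u a τ : ℝ) : HasDerivAt (fun τ : ℝ => u + a * τ) a τ := by
    simpa using ((hasDerivAt_id τ).const_mul a).const_add u
  have hpoint (u a τ : ℝ) :
      HasDerivAt (fun τ => γ (u + a * τ)) (a • deriv γ (u + a * τ)) τ :=
    (hγ.differentiable two_ne_zero _).hasDerivAt.scomp τ (hline u a τ)
  have hvelocity (u a τ : ℝ) :
      HasDerivAt (fun τ => deriv γ (u + a * τ)) (a • deriv (deriv γ) (u + a * τ)) τ :=
    (hγ'.differentiable one_ne_zero _).hasDerivAt.scomp τ (hline u a τ)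
  have hspeed (u a : ℝ) (hu : deriv γ u ≠ 0) :
      HasDerivAt (fun τ => a * ‖deriv γ (u + a * τ)‖)
        (a ^ 2 * (⟪deriv γ u, deriv (deriv γ) u⟫ / ‖deriv γ u‖)) 0 := by
    refine ((hasDerivAt_norm_comp (hvelocity u a 0) (by simpa using hu)).const_mul a).congr_deriv ?_
    simp only [mul_zero, add_zero, inner_smul_right]
    ring
  have hmin_path : IsLocalMin (fun τ => chordArcRatio γ (p + α * τ) (q + β * τ)) 0 :=
    IsLocalMin.comp_continuous (f := fun z : ℝ × ℝ => chordArcRatio γ z.1 z.2)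
      (g := fun τ : ℝ => (p + α * τ, q + β * τ)) (b := 0) (by simpa using hmin) (by fun_prop)
  have hvariation := variation_of_isLocalMin_norm_div (x₀ := 0) (r := chordArcRatio γ p q)
    (fun τ => (hpoint q β τ).fun_sub (hpoint p α τ))
    (((hvelocity q β 0).const_smul β).sub ((hvelocity p α 0).const_smul α))
    (fun τ => hasDerivAt_arcLength_comp hγ'.continuous (hline p α τ) (hline q β τ))
    ((hspeed q β hq).sub (hspeed p α hp)) (by simpa using hpos)
    (by simp [chordArcRatio]) hmin_path
  simpa only [mul_zero, add_zero, smul_smul, ← sq] using hvariation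

theorem inner_chord_unitTangent_of_isLocalMin (hγ : ContDiff ℝ 2 γ) (hp : deriv γ p ≠ 0)
    (hq : deriv γ q ≠ 0) (hpos : 0 < arcLength γ p q)
    (hmin : IsLocalMin (fun z : ℝ × ℝ => chordArcRatio γ z.1 z.2) (p, q)) :
    ⟪γ q - γ p, unitTangent γ p⟫ = chordArcRatio γ p q ^ 2 * arcLength γ p q ∧
      ⟪γ q - γ p, unitTangent γ q⟫ = chordArcRatio γ p q ^ 2 * arcLength γ p q := by
  have hfirst (α β : ℝ) :=
    (variation_of_isLocalMin_chordArcRatio hγ hp hq hpos hmin α β).1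
  constructor
  · simpa [unitTangent, hp] using hfirst (-‖deriv γ p‖⁻¹) 0
  · simpa [unitTangent, hq] using hfirst 0 ‖deriv γ q‖⁻¹

theorem second_variation_of_isLocalMin (hγ : ContDiff ℝ 2 γ) (hp : deriv γ p ≠ 0)
    (hq : deriv γ q ≠ 0) (hpos : 0 < arcLength γ p q)
    (hmin : IsLocalMin (fun z : ℝ × ℝ => chordArcRatio γ z.1 z.2) (p, q)) {ε : ℝ}
    (hε : ε ^ 2 = 1) :
    0 ≤ ‖unitTangent γ q - ε • unitTangent γ p‖ ^ 2 - chordArcRatio γ p q ^ 2 * (1 - ε) ^ 2 +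
      ⟪γ q - γ p, curvatureVector γ q - curvatureVector γ p⟫ := by
  have hγ' : Differentiable ℝ (deriv γ) := (hγ.deriv' (n := 1)).differentiable one_ne_zero
  obtain ⟨hTp, hTq⟩ := inner_chord_unitTangent_of_isLocalMin hγ hp hq hpos hmin
  have hsecond := (variation_of_isLocalMin_chordArcRatio hγ hp hq hpos hmin
    (ε * ‖deriv γ p‖⁻¹) ‖deriv γ q‖⁻¹).2
  have hvp := norm_ne_zero_iff.2 hp
  have hvq := norm_ne_zero_iff.2 hq
  have haccel {u : ℝ} (hu : deriv γ u ≠ 0) : ⟪γ q - γ p, curvatureVector γ u⟫ =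
      (‖deriv γ u‖ ^ 2)⁻¹ * ⟪γ q - γ p, deriv (deriv γ) u⟫ -
        (⟪deriv γ u, deriv (deriv γ) u⟫ / ‖deriv γ u‖ ^ 3) * ⟪γ q - γ p, unitTangent γ u⟫ := by
    rw [curvatureVector_eq (hγ' u) hu, inner_sub_right, inner_smul_right, inner_smul_right,
      unitTangent, inner_smul_right]
    field_simp
  rw [inner_sub_right, haccel hp, haccel hq, hTp, hTq]
  rw [mul_pow, hε, one_mul, mul_smul, inner_sub_right, inner_smul_right, inner_smul_right,
    mul_assoc ε, inv_mul_cancel₀ hvp, inv_mul_cancel₀ hvq, mul_one] at hsecond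
  refine hsecond.trans_eq ?_
  simp only [unitTangent]
  field_simp
  ring

theorem inner_chord_curvatureVector_sub_nonneg_of_isLocalMin [Fact (Module.finrank ℝ E = 2)]
    (hγ : ContDiff ℝ 2 γ) (hp : deriv γ p ≠ 0) (hq : deriv γ q ≠ 0)
    (hpos : 0 < arcLength γ p q) (hne : γ p ≠ γ q)
    (hmin : IsLocalMin (fun z : ℝ × ℝ => chordArcRatio γ z.1 z.2) (p, q)) :
    0 ≤ ⟪γ q - γ p, curvatureVector γ q - curvatureVector γ p⟫ := by
  obtain ⟨hTp, hTq⟩ := inner_chord_unitTangent_of_isLocalMin hγ hp hq hpos hmin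
  have hchord : ‖γ q - γ p‖ ≠ 0 := norm_ne_zero_iff.2 (sub_ne_zero.2 hne.symm)
  have hw : ‖‖γ q - γ p‖⁻¹ • (γ q - γ p)‖ = 1 := by
    rw [norm_smul, norm_inv, norm_norm, inv_mul_cancel₀ hchord]
  have hangle : ⟪‖γ q - γ p‖⁻¹ • (γ q - γ p), unitTangent γ p⟫ = chordArcRatio γ p q := by
    rw [real_inner_smul_left, hTp, chordArcRatio]
    field_simp
  have hangles : ⟪‖γ q - γ p‖⁻¹ • (γ q - γ p), unitTangent γ p⟫ =
      ⟪‖γ q - γ p‖⁻¹ • (γ q - γ p), unitTangent γ q⟫ := by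
    rw [real_inner_smul_left, real_inner_smul_left, hTp, hTq]
  obtain hparallel | hreflected := eq_or_add_eq_smul_of_inner_eq hw
    ((norm_unitTangent hp).trans (norm_unitTangent hq).symm) hangles
  · simpa [hparallel] using second_variation_of_isLocalMin hγ hp hq hpos hmin (one_pow 2)
  · have hsecond := second_variation_of_isLocalMin hγ hp hq hpos hmin (ε := -1) (by norm_num)
    rw [neg_one_smul, sub_neg_eq_add, hreflected, norm_smul, hw, hangle, mul_one,
      Real.norm_eq_abs, sq_abs] at hsecond
    linarith

end DistanceComparison

section Flow

variable {E : Type*} [NormedAddCommGroup E] [InnerProductSpace ℝ E] {F : ℝ → ℝ → E}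
  {p q t₀ : ℝ}

theorem hasDerivAt_arcLength_family (hF : ContDiff ℝ 2 (uncurry F))
    (himm : ∀ u ∈ uIcc p q, deriv (fun x => F x t₀) u ≠ 0) :
    HasDerivAt (fun t => arcLength (fun x => F x t) p q)
      (∫ u in p..q, ⟪deriv (fun x => F x t₀) u, deriv (fun x => deriv (F x) t₀) u⟫ /
        ‖deriv (fun x => F x t₀) u‖) t₀ := by
  have hP : ContDiff ℝ 1 (uncurry fun t u => deriv (fun x => F x t) u) :=
    (contDiff_deriv_left hF).comp (contDiff_snd.prodMk contDiff_fst)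
  have hZ : Continuous (uncurry fun t u => deriv (fun x => deriv (F x) t) u) :=
    (contDiff_deriv_left (n := 0) (contDiff_deriv_right hF)).continuous.comp continuous_swap
  have himm_near : ∀ᶠ t in 𝓝 t₀, ∀ u ∈ uIcc p q, deriv (fun x => F x t) u ≠ 0 :=
    isCompact_uIcc.eventually_forall_of_forall_eventually fun u hu =>
      hP.continuous.continuousAt.eventually_ne (himm u hu)
  refine hasDerivAt_intervalIntegral_of_continuousOn himm_near ?_ ?_ ?_
    (f' := fun t u => ⟪deriv (fun x => F x t) u, deriv (fun x => deriv (F x) t) u⟫ /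
      ‖deriv (fun x => F x t) u‖)
  · exact fun t _ => (hP.continuous.uncurry_left t).norm.continuousOn
  · exact (hP.continuous.inner hZ).continuousOn.div hP.continuous.norm.continuousOn
      fun z hz => norm_ne_zero_iff.2 (hz.1 z.2 hz.2)
  · intro t ht u hu
    refine hasDerivAt_norm_comp ?_ (ht u hu)
    rw [← deriv_deriv_comm hF]
    exact ((hP.comp (contDiff_prodMk_left u)).differentiable one_ne_zero t).hasDerivAt

-- `⟪∂ᵤF, ∂ₜF⟫` vanishes along the curve, so differentiating it in `u` trades `∂ᵤ∂ₜF` for `∂ᵤ²F`.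
theorem inner_deriv_deriv_of_curvatureFlow (hF : ContDiff ℝ 2 (uncurry F)) (hpq : p < q)
    (himm : ∀ u ∈ Icc p q, deriv (fun x => F x t₀) u ≠ 0)
    (hflow : ∀ u ∈ Icc p q, deriv (F u) t₀ = curvatureVector (fun x => F x t₀) u) {u : ℝ}
    (hu : u ∈ Icc p q) :
    ⟪deriv (fun x => F x t₀) u, deriv (fun x => deriv (F x) t₀) u⟫ =
      -(‖curvatureVector (fun x => F x t₀) u‖ ^ 2 * ‖deriv (fun x => F x t₀) u‖ ^ 2) := by
  have hP : Differentiable ℝ (deriv fun x => F x t₀) :=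
    ((contDiff_deriv_left hF).comp (contDiff_prodMk_left t₀)).differentiable one_ne_zero
  have hX : Differentiable ℝ fun x => deriv (F x) t₀ :=
    ((contDiff_deriv_right hF).comp (contDiff_prodMk_left t₀)).differentiable one_ne_zero
  have horth : EqOn (fun x => ⟪deriv (fun x => F x t₀) x, deriv (F x) t₀⟫) (fun _ => 0)
      (Icc p q) := fun x hx => by
    simp only [hflow x hx, inner_deriv_curvatureVector (hP x) (himm x hx)]
  have hzero := (uniqueDiffOn_Icc hpq u hu).eq_deriv _
    ((hP u).hasDerivAt.inner ℝ (hX u).hasDerivAt).hasDerivWithinAt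
    ((hasDerivWithinAt_const u _ (0 : ℝ)).congr horth (horth hu))
  rw [hflow u hu, real_inner_comm (curvatureVector _ u),
    inner_curvatureVector_deriv_deriv (hP u) (himm u hu)] at hzero
  exact eq_neg_of_add_eq_zero_left hzero

theorem hasDerivAt_arcLength_of_curvatureFlow (hF : ContDiff ℝ 2 (uncurry F)) (hpq : p < q)
    (himm : ∀ u ∈ Icc p q, deriv (fun x => F x t₀) u ≠ 0)
    (hflow : ∀ u ∈ Icc p q, deriv (F u) t₀ = curvatureVector (fun x => F x t₀) u) :
    HasDerivAt (fun t => arcLength (fun x => F x t) p q)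
      (-∫ u in p..q, ‖curvatureVector (fun x => F x t₀) u‖ ^ 2 * ‖deriv (fun x => F x t₀) u‖)
      t₀ := by
  rw [← uIcc_of_le hpq.le] at himm
  refine (hasDerivAt_arcLength_family hF himm).congr_deriv ?_
  rw [← intervalIntegral.integral_neg]
  refine intervalIntegral.integral_congr fun u hu => ?_
  have hspeed := norm_ne_zero_iff.2 (himm u hu)
  rw [uIcc_of_le hpq.le] at himm hu
  simp only [inner_deriv_deriv_of_curvatureFlow hF hpq himm hflow hu]
  field_simp

theorem interior_estimate_general [Fact (Module.finrank ℝ E = 2)]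
    (hF : ContDiff ℝ 2 (uncurry F)) (hpq : p < q)
    (himm : ∀ u ∈ Icc p q, deriv (fun x => F x t₀) u ≠ 0)
    (hflow : ∀ u ∈ Icc p q, deriv (F u) t₀ = curvatureVector (fun x => F x t₀) u)
    (hne : F p t₀ ≠ F q t₀)
    (hmin : IsLocalMin (fun z : ℝ × ℝ => chordArcRatio (fun x => F x t₀) z.1 z.2) (p, q)) :
    ∃ d : ℝ, HasDerivAt (fun t => chordArcRatio (fun x => F x t) p q) d t₀ ∧ 0 ≤ d := by
  have hγ : ContDiff ℝ 2 fun x => F x t₀ := hF.comp (contDiff_prodMk_left t₀)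
  have hp := left_mem_Icc.2 hpq.le
  have hq := right_mem_Icc.2 hpq.le
  have hpos : 0 < arcLength (fun x => F x t₀) p q :=
    arcLength_pos (hγ.continuous_deriv one_le_two) himm hpq
  have hpoint (u : ℝ) : HasDerivAt (F u) (deriv (F u) t₀) t₀ :=
    ((hF.comp (contDiff_prodMk_right u)).differentiable two_ne_zero t₀).hasDerivAt
  have hchord : HasDerivAt (fun t => ‖F q t - F p t‖) _ t₀ :=
    hasDerivAt_norm_comp ((hpoint q).fun_sub (hpoint p)) (sub_ne_zero.2 hne.symm)
  have harc := hasDerivAt_arcLength_of_curvatureFlow hF hpq himm hflow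
  have hchord_nonneg : 0 ≤ ⟪F q t₀ - F p t₀, deriv (F q) t₀ - deriv (F p) t₀⟫ := by
    rw [hflow p hp, hflow q hq]
    exact inner_chord_curvatureVector_sub_nonneg_of_isLocalMin hγ (himm p hp) (himm q hq) hpos
      hne hmin
  have harc_nonneg : 0 ≤ ∫ u in p..q,
      ‖curvatureVector (fun x => F x t₀) u‖ ^ 2 * ‖deriv (fun x => F x t₀) u‖ :=
    intervalIntegral.integral_nonneg hpq.le fun u _ => by positivity
  refine ⟨_, hchord.fun_div harc hpos.ne', ?_⟩
  rw [mul_neg, sub_neg_eq_add]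
  positivity

end Flow

section Plane

instance fact_finrank_E2 : Fact (Module.finrank ℝ E2 = 2) := ⟨finrank_euclideanSpace_fin⟩

theorem inner_smul_add_inner_rot_smul (x y : E2) :
    ⟪x, y⟫ • y + ⟪x, rot y⟫ • rot y = ‖y‖ ^ 2 • x := by
  rw [EuclideanSpace.real_norm_sq_eq]
  ext i
  fin_cases i <;> simp [rot, PiLp.inner_apply, Fin.sum_univ_two] <;> ring

theorem curv_smul_nor_eq_curvatureVector {F : ℝ → ℝ → E2} {u t : ℝ}
    (hF : DifferentiableAt ℝ (deriv fun x => F x t) u) (hu : CSF.pu F u t ≠ 0) :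
    CSF.curv F u t • CSF.nor F u t = curvatureVector (fun x => F x t) u := by
  have horth : ⟪curvatureVector (fun x => F x t) u, CSF.tang F u t⟫ = 0 := by
    rw [real_inner_comm, CSF.tang, real_inner_smul_left]
    exact mul_eq_zero_of_right _ (inner_deriv_curvatureVector hF hu)
  have hunit : ‖CSF.tang F u t‖ = 1 := norm_unitTangent hu
  have hexpand :=
    inner_smul_add_inner_rot_smul (curvatureVector (fun x => F x t) u) (CSF.tang F u t)
  rwa [horth, hunit, zero_smul, zero_add, one_pow, one_smul] at hexpand

theorem CSF.IsCSF.contDiff_two {F : ℝ → ℝ → E2} {a b T : ℝ} (hF : CSF.IsCSF F a b T) :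
    ContDiff ℝ 2 (uncurry F) :=
  hF.1.of_le (WithTop.coe_le_coe.2 le_top)

theorem CSF.IsCSF.deriv_eq_curvatureVector {F : ℝ → ℝ → E2} {a b T : ℝ}
    (hF : CSF.IsCSF F a b T) {u t : ℝ} (hu : u ∈ Icc a b) (ht : t ∈ Ico 0 T) :
    deriv (F u) t = curvatureVector (fun x => F x t) u := by
  have hvelocity : Differentiable ℝ (deriv fun x => F x t) :=
    ((contDiff_deriv_left hF.contDiff_two).comp (contDiff_prodMk_left t)).differentiable
      one_ne_zero
  exact (hF.2.2 u hu t ht).trans (curv_smul_nor_eq_curvatureVector (hvelocity u) (hF.2.1 u hu t ht))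

end Plane

/-- Interior estimate for the distance ratio: if at time t̂ the ratio D/L of
extrinsic to intrinsic distance attains a local minimum at an interior point (p,q), then
d/dt (D/L)(p,q;t) ≥ 0 at t = t̂. -/
theorem interior_estimate (a b T : ℝ) (hab : a < b) (hT : 0 < T)
    (F : ℝ → ℝ → E2) (hF : CSF.IsCSF F a b T)
    (hemb : ∀ t ∈ Ico 0 T, Set.InjOn (fun u => F u t) (Icc a b))
    (D L : ℝ → ℝ → ℝ → ℝ)
    (hD : ∀ p q t, D p q t = ‖F q t - F p t‖)
    (hL : ∀ p q t, L p q t = ∫ u in p..q, CSF.speed F u t)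
    (t₀ : ℝ) (ht₀ : t₀ ∈ Ioo 0 T)
    (p q : ℝ) (hap : a < p) (hpq : p < q) (hqb : q < b)
    (hne : F p t₀ ≠ F q t₀)
    (hmin : IsLocalMin (fun z : ℝ × ℝ => D z.1 z.2 t₀ / L z.1 z.2 t₀) (p, q)) :
    ∃ d : ℝ, HasDerivAt (fun t => D p q t / L p q t) d t₀ ∧ 0 ≤ d := by
  have hsub : Icc p q ⊆ Icc a b := Icc_subset_Icc hap.le hqb.le
  have ht : t₀ ∈ Ico 0 T := Ioo_subset_Ico_self ht₀
  simp only [hD, hL] at hmin ⊢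
  exact interior_estimate_general hF.contDiff_two hpq (fun u hu => hF.2.1 u (hsub hu) t₀ ht)
    (fun u hu => hF.deriv_eq_curvatureVector (hsub hu) ht) hne hmin
end
end
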